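/- In a graph with no cycle of length divisible by 4, any two odd cycles whose lengths are congruent modulo 4 must intersect (they cannot be connected by three pairwise vertex-disjoint paths while remaining disjoint). In particular, if the graph is essentially 3-connected and planar, it contains no two vertex-disjoint 5-cycles. -/

import Mathlib

/-- The graph obtained from `G` by deleting the vertices of `S`
(the vertices of `S` stay present but become isolated). -/
def deleteVerts {V : Type*} (G : SimpleGraph V) (S : Set V) : SimpleGraph V :=
  SimpleGraph.fromRel fun a b => G.Adj a b ∧ a ∉ S ∧ b ∉ S

/-- `G` is essentially 3-connected: `G` is connected and has no vertex cut `S` with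
`|S| ≤ 2` such that `G − S` has two distinct components with at least two vertices
each. -/
def EssentiallyThreeConnected {V : Type*} (G : SimpleGraph V) : Prop :=
  G.Connected ∧
    ∀ S : Set V, S.ncard ≤ 2 →
      ∀ a a' b b' : V, a ≠ a' → b ≠ b' →
        (deleteVerts G S).Reachable a a' → (deleteVerts G S).Reachable b b' →
        (deleteVerts G S).Reachable a b

open SimpleGraph

/-- Two distinct vertices split a cycle into two paths. -/
lemma cycle_split {V : Type*} {G : SimpleGraph V} {v : V} (C : G.Walk v v) (hC : C.IsCycle)
    {a b : V} (ha : a ∈ C.support) (hb : b ∈ C.support) (hab : a ≠ b) :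
    ∃ p q : G.Walk a b, p.IsPath ∧ q.IsPath ∧ p.length + q.length = C.length ∧
      (∀ u ∈ p.support, u ∈ C.support) ∧ (∀ u ∈ q.support, u ∈ C.support) := by
  classical
  have hD : (C.rotate a ha).IsCycle := hC.rotate ha
  have hm : ∀ u, u ∈ (C.rotate a ha).support ↔ u ∈ C.support := fun u =>
    Walk.mem_support_rotate_iff C a ha
  have hl : (C.rotate a ha).length = C.length := Walk.length_rotate C a ha
  generalize C.rotate a ha = D at hD hm hl
  obtain ⟨p, q, hpq⟩ := Walk.mem_support_iff_exists_append.mp ((hm b).mpr hb)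
  subst hpq
  refine ⟨p, q.reverse, hD.isPath_of_append_left (Walk.not_nil_of_ne hab.symm),
    (hD.isPath_of_append_right (Walk.not_nil_of_ne hab)).reverse, ?_, ?_, ?_⟩
  · simpa using hl
  · intro u hu
    rw [← hm]; simp [hu]
  · intro u hu
    rw [← hm]; simp at hu; simp [hu]

lemma path_append {V : Type*} {G : SimpleGraph V} {a b c : V} {p : G.Walk a b} {q : G.Walk b c}
    (hp : p.IsPath) (hq : q.IsPath) (h : ∀ u ∈ p.support, u ∈ q.support → u = b) :
    (p.append q).IsPath := by
  rw [Walk.isPath_def, Walk.support_append, List.nodup_append']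
  refine ⟨hp.support_nodup, hq.support_nodup.tail, ?_⟩
  intro u hu hu'
  have := h u hu (List.mem_of_mem_tail hu')
  subst this
  have h2 := hq.support_nodup
  rw [← Walk.cons_tail_support, List.nodup_cons] at h2
  exact h2.1 hu'

lemma cycle_of_four {V : Type*} {G : SimpleGraph V} {a₁ a₂ b₁ b₂ : V} {X₁ X₂ : Set V}
    (hX : ∀ u, u ∈ X₁ → u ∉ X₂)
    {P : G.Walk a₁ a₂} {Q : G.Walk b₁ b₂} (hP : P.IsPath) (hQ : Q.IsPath)
    (hPX : ∀ u ∈ P.support, u ≠ a₁ → u ≠ a₂ → u ∉ X₁ ∧ u ∉ X₂)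
    (hQX : ∀ u ∈ Q.support, u ≠ b₁ → u ≠ b₂ → u ∉ X₁ ∧ u ∉ X₂)
    (hPQ : ∀ u, u ∈ P.support → u ∉ Q.support)
    {p : G.Walk a₁ b₁} {q : G.Walk a₂ b₂} (hp : p.IsPath) (hq : q.IsPath)
    (hpX : ∀ u ∈ p.support, u ∈ X₁) (hqX : ∀ u ∈ q.support, u ∈ X₂) :
    ∃ (u : V) (c : G.Walk u u), c.IsCycle ∧
      c.length = p.length + q.length + P.length + Q.length := by
  have ha1 := hpX _ p.start_mem_support
  have hb1 := hpX _ p.end_mem_support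
  have ha2 := hqX _ q.start_mem_support
  have hb2 := hqX _ q.end_mem_support
  have hab1 : a₁ ≠ b₁ := by
    rintro rfl; exact hPQ _ P.start_mem_support Q.start_mem_support
  have hab2 : a₂ ≠ b₂ := by
    rintro rfl; exact hPQ _ P.end_mem_support Q.end_mem_support
  have hQ1 : ∀ u ∈ Q.support, u ∈ X₁ → u = b₁ := by
    intro u hu hu1; by_contra h
    by_cases h2 : u = b₂
    · subst h2; exact hX _ hu1 hb2
    · exact (hQX u hu h h2).1 hu1
  have hQ2 : ∀ u ∈ Q.support, u ∈ X₂ → u = b₂ := by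
    intro u hu hu1; by_contra h
    by_cases h2 : u = b₁
    · subst h2; exact hX _ hb1 hu1
    · exact (hQX u hu h2 h).2 hu1
  have hP1 : ∀ u ∈ P.support, u ∈ X₁ → u = a₁ := by
    intro u hu hu1; by_contra h
    by_cases h2 : u = a₂
    · subst h2; exact hX _ hu1 ha2
    · exact (hPX u hu h h2).1 hu1
  have hP2 : ∀ u ∈ P.support, u ∈ X₂ → u = a₂ := by
    intro u hu hu1; by_contra h
    by_cases h2 : u = a₁
    · subst h2; exact hX _ ha1 hu1
    · exact (hPX u hu h2 h).2 hu1
  have h1 : (p.append Q).IsPath := path_append hp hQ (fun u hu hu' => hQ1 u hu' (hpX u hu))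
  have h2 : (q.reverse.append P.reverse).IsPath := by
    refine path_append hq.reverse hP.reverse (fun u hu hu' => ?_)
    simp at hu hu'
    exact hP2 u hu' (hqX u hu)
  refine ⟨a₁, (p.append Q).append (q.reverse.append P.reverse), ?_, ?_⟩
  · refine h1.isCycle_append h2 ?_ ?_
    · intro u hu hu'
      have e1 : u ≠ a₁ := by
        rintro rfl
        have h3 := h1.support_nodup
        rw [← Walk.cons_tail_support, List.nodup_cons] at h3
        exact h3.1 hu
      have e2 : u ≠ b₂ := by
        rintro rfl
        have h3 := h2.support_nodup
        rw [← Walk.cons_tail_support, List.nodup_cons] at h3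
        exact h3.1 hu'
      replace hu := List.mem_of_mem_tail hu
      replace hu' := List.mem_of_mem_tail hu'
      simp only [Walk.mem_support_append_iff, Walk.support_reverse, List.mem_reverse] at hu hu'
      rcases hu with hu | hu <;> rcases hu' with hu' | hu'
      · exact hX _ (hpX _ hu) (hqX _ hu')
      · exact e1 (hP1 _ hu' (hpX _ hu))
      · exact e2 (hQ2 _ hu (hqX _ hu'))
      · exact hPQ _ hu' hu
    · left
      have l1 : p.length ≠ 0 := fun h => hab1 (Walk.eq_of_length_eq_zero h)
      have l2 : Q.length ≠ 0 := fun h => by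
        have := Walk.eq_of_length_eq_zero h
        subst this; exact hX _ hb1 hb2
      simp; omega
  · simp; omega

lemma two_paths_odd {V : Type*} {G : SimpleGraph V}
    (hno : ¬ ∃ (u : V) (c : G.Walk u u), c.IsCycle ∧ 4 ∣ c.length)
    {v₁ v₂ : V} {C₁ : G.Walk v₁ v₁} {C₂ : G.Walk v₂ v₂} {a₁ a₂ b₁ b₂ : V}
    {P : G.Walk a₁ a₂} {Q : G.Walk b₁ b₂} (hC₁ : C₁.IsCycle) (hC₂ : C₂.IsCycle)
    (ho₁ : Odd C₁.length) (hmod : C₁.length % 4 = C₂.length % 4)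
    (hX : ∀ u, u ∈ C₁.support → u ∉ C₂.support) (hP : P.IsPath) (hQ : Q.IsPath)
    (ha₁ : a₁ ∈ C₁.support) (ha₂ : a₂ ∈ C₂.support)
    (hb₁ : b₁ ∈ C₁.support) (hb₂ : b₂ ∈ C₂.support)
    (hPX : ∀ u ∈ P.support, u ≠ a₁ → u ≠ a₂ → u ∉ C₁.support ∧ u ∉ C₂.support)
    (hQX : ∀ u ∈ Q.support, u ≠ b₁ → u ≠ b₂ → u ∉ C₁.support ∧ u ∉ C₂.support)
    (hPQ : ∀ u, u ∈ P.support → u ∉ Q.support) : (P.length + Q.length) % 2 = 1 := by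
  have hab1 : a₁ ≠ b₁ := by
    rintro rfl; exact hPQ _ P.start_mem_support Q.start_mem_support
  have hab2 : a₂ ≠ b₂ := by
    rintro rfl; exact hPQ _ P.end_mem_support Q.end_mem_support
  obtain ⟨p, p', hp, hp', hpl, hps, hps'⟩ := cycle_split C₁ hC₁ ha₁ hb₁ hab1
  obtain ⟨q, q', hq, hq', hql, hqs, hqs'⟩ := cycle_split C₂ hC₂ ha₂ hb₂ hab2
  have key : ∀ (r : G.Walk a₁ b₁) (s : G.Walk a₂ b₂), r.IsPath → s.IsPath →
      (∀ u ∈ r.support, u ∈ C₁.support) → (∀ u ∈ s.support, u ∈ C₂.support) →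
      (r.length + s.length + P.length + Q.length) % 4 ≠ 0 := by
    intro r s hr hs hr' hs' h4
    obtain ⟨u, c, hc, hcl⟩ := cycle_of_four (X₁ := {u | u ∈ C₁.support})
      (X₂ := {u | u ∈ C₂.support}) hX hP hQ hPX hQX hPQ hr hs hr' hs'
    exact hno ⟨u, c, hc, by omega⟩
  have k1 := key p q hp hq hps hqs
  have k2 := key p q' hp hq' hps hqs'
  have k3 := key p' q hp' hq hps' hqs
  have k4 := key p' q' hp' hq' hps' hqs'
  obtain ⟨t, ht⟩ := ho₁
  omega

lemma no_three_paths {V : Type*} (G : SimpleGraph V)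
    (hno : ¬ ∃ (u : V) (c : G.Walk u u), c.IsCycle ∧ 4 ∣ c.length) :
    (¬ ∃ (v₁ v₂ : V) (C₁ : G.Walk v₁ v₁) (C₂ : G.Walk v₂ v₂)
        (a₁ a₂ b₁ b₂ c₁ c₂ : V)
        (P : G.Walk a₁ a₂) (Q : G.Walk b₁ b₂) (R : G.Walk c₁ c₂),
      C₁.IsCycle ∧ C₂.IsCycle ∧ Odd C₁.length ∧ Odd C₂.length ∧
      C₁.length % 4 = C₂.length % 4 ∧
      (∀ u, u ∈ C₁.support → u ∉ C₂.support) ∧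
      P.IsPath ∧ Q.IsPath ∧ R.IsPath ∧
      a₁ ∈ C₁.support ∧ a₂ ∈ C₂.support ∧
      b₁ ∈ C₁.support ∧ b₂ ∈ C₂.support ∧
      c₁ ∈ C₁.support ∧ c₂ ∈ C₂.support ∧
      (∀ u ∈ P.support, u ≠ a₁ → u ≠ a₂ → u ∉ C₁.support ∧ u ∉ C₂.support) ∧
      (∀ u ∈ Q.support, u ≠ b₁ → u ≠ b₂ → u ∉ C₁.support ∧ u ∉ C₂.support) ∧
      (∀ u ∈ R.support, u ≠ c₁ → u ≠ c₂ → u ∉ C₁.support ∧ u ∉ C₂.support) ∧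
      (∀ u, u ∈ P.support → u ∉ Q.support) ∧
      (∀ u, u ∈ P.support → u ∉ R.support) ∧
      (∀ u, u ∈ Q.support → u ∉ R.support)) := by
  rintro ⟨v₁, v₂, C₁, C₂, a₁, a₂, b₁, b₂, c₁, c₂, P, Q, R, hC₁, hC₂, ho₁, ho₂, hmod, hX, hP, hQ, hR,
    ha₁, ha₂, hb₁, hb₂, hc₁, hc₂, hPX, hQX, hRX, hPQ, hPR, hQR⟩
  have h1 := two_paths_odd hno hC₁ hC₂ ho₁ hmod hX hP hQ ha₁ ha₂ hb₁ hb₂ hPX hQX hPQ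
  have h2 := two_paths_odd hno hC₁ hC₂ ho₁ hmod hX hP hR ha₁ ha₂ hc₁ hc₂ hPX hRX hPR
  have h3 := two_paths_odd hno hC₁ hC₂ ho₁ hmod hX hQ hR hb₁ hb₂ hc₁ hc₂ hQX hRX hQR
  omega

/-- There is a walk from `A` to `B` avoiding `T`. -/
def AvoidWalk {V : Type*} (G : SimpleGraph V) (A B T : Set V) : Prop :=
  ∃ a ∈ A, ∃ b ∈ B, ∃ w : G.Walk a b, ∀ u ∈ w.support, u ∉ T

/-- There are `k` disjoint paths from `A` to `B`. -/
def Linked {V : Type*} (G : SimpleGraph V) (A B : Set V) (k : ℕ) : Prop :=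
  ∃ (a b : Fin k → V) (p : ∀ i, G.Walk (a i) (b i)), (∀ i, a i ∈ A) ∧ (∀ i, b i ∈ B) ∧
    (∀ i, (p i).IsPath) ∧ ∀ i j u, u ∈ (p i).support → u ∈ (p j).support → i = j

lemma AvoidWalk.symm {V : Type*} {G : SimpleGraph V} {A B T : Set V} (h : AvoidWalk G A B T) :
    AvoidWalk G B A T := by
  obtain ⟨a, ha, b, hb, w, hw⟩ := h
  exact ⟨b, hb, a, ha, w.reverse, by simpa using hw⟩

lemma Linked.symm {V : Type*} {G : SimpleGraph V} {A B : Set V} {k : ℕ} (h : Linked G A B k) :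
    Linked G B A k := by
  obtain ⟨a, b, p, ha, hb, hp, hd⟩ := h
  exact ⟨b, a, fun i => (p i).reverse, hb, ha, fun i => (hp i).reverse, by simpa using hd⟩

lemma Linked.mono {V : Type*} {G H : SimpleGraph V} (hGH : G ≤ H) {A B : Set V} {k : ℕ}
    (h : Linked G A B k) : Linked H A B k := by
  obtain ⟨a, b, p, ha, hb, hp, hd⟩ := h
  exact ⟨a, b, fun i => (p i).mapLe hGH, ha, hb, fun i => by simpa using hp i, by simpa using hd⟩

lemma AvoidWalk.trans_mem {V : Type*} {G : SimpleGraph V} {A B T : Set V} {x : V}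
    (h : AvoidWalk G A {x} T) (h' : AvoidWalk G {x} B T) : AvoidWalk G A B T := by
  obtain ⟨a, ha, _, rfl, w, hw⟩ := h
  obtain ⟨_, rfl, b, hb, w', hw'⟩ := h'
  refine ⟨a, ha, b, hb, w.append w', fun u hu => ?_⟩
  rcases (Walk.mem_support_append_iff _ _).mp hu with hu | hu
  · exact hw u hu
  · exact hw' u hu

lemma AvoidWalk.step {V : Type*} {G : SimpleGraph V} {A T : Set V} {x y : V}
    (h : AvoidWalk G A {x} T) (hxy : G.Adj x y) (hy : y ∉ T) : AvoidWalk G A {y} T := by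
  obtain ⟨a, ha, _, rfl, w, hw⟩ := h
  refine ⟨a, ha, y, rfl, w.concat hxy, fun u hu => ?_⟩
  simp [Walk.support_concat] at hu
  rcases hu with hu | rfl
  · exact hw u hu
  · exact hy

lemma AvoidWalk.anti {V : Type*} {G : SimpleGraph V} {A B T T' : Set V} (hT : T' ⊆ T)
    (h : AvoidWalk G A B T) : AvoidWalk G A B T' := by
  obtain ⟨a, ha, b, hb, w, hw⟩ := h
  exact ⟨a, ha, b, hb, w, fun u hu h => hw u hu (hT h)⟩

/-- Deleting the edge `xy`. -/
lemma side_aux {V : Type*} {G G' : SimpleGraph V} {A B S T : Set V} {x y : V}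
    (hG' : ∀ u v, G.Adj u v → u ≠ x → u ≠ y → G'.Adj u v)
    (hS : ¬ AvoidWalk G' A B S) (hy : ¬ AvoidWalk G' A {y} S)
    {v b : V} (w : G.Walk v b) (hb : b ∈ B) (hw : ∀ u ∈ w.support, u ∉ T)
    (hv : AvoidWalk G' A {v} (S ∪ T)) : AvoidWalk G' A (insert x S) T := by
  induction w with
  | nil =>
    exact absurd (AvoidWalk.anti Set.subset_union_left (by
      obtain ⟨a, ha, _, rfl, w, hw⟩ := hv
      exact ⟨a, ha, _, hb, w, hw⟩)) hS
  | @cons v v' b h w ih =>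
    by_cases hvx : v = x
    · subst hvx
      obtain ⟨a, ha, _, rfl, w₁, hw₁⟩ := hv
      exact ⟨a, ha, _, Set.mem_insert _ _, w₁, fun u hu h => hw₁ u hu (Or.inr h)⟩
    have hvy : v ≠ y := by
      rintro rfl; exact hy (hv.anti Set.subset_union_left)
    have hadj := hG' _ _ h hvx hvy
    have hv'T : v' ∉ T := hw v' (by simp)
    by_cases hv'S : v' ∈ S
    · obtain ⟨a, ha, _, e, w₁, hw₁⟩ := (hv.anti Set.subset_union_right).step hadj hv'T
      obtain rfl : _ = v' := e
      exact ⟨a, ha, _, Set.mem_insert_of_mem _ hv'S, w₁, hw₁⟩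
    · exact ih hb (fun u hu => hw u (by simp [hu]))
        (hv.step hadj (by simp [hv'S, hv'T]))

lemma side {V : Type*} {G G' : SimpleGraph V} {A B S T : Set V} {x y : V}
    (hG' : ∀ u v, G.Adj u v → u ≠ x → u ≠ y → G'.Adj u v)
    (hS : ¬ AvoidWalk G' A B S) (hy : ¬ AvoidWalk G' A {y} S)
    (h : AvoidWalk G A B T) : AvoidWalk G' A (insert x S) T := by
  obtain ⟨a, ha, b, hb, w, hw⟩ := h
  have haT : a ∉ T := hw a w.start_mem_support
  by_cases haS : a ∈ S
  · exact ⟨a, ha, a, Set.mem_insert_of_mem _ haS, Walk.nil, by simpa using haT⟩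
  · exact side_aux hG' hS hy w hb hw ⟨a, ha, a, rfl, Walk.nil, by simp [haS, haT]⟩

/-- Every edge-crossing: a walk in `G` avoiding `S` gives `A → x`, `y → B` or `A → y`, `x → B`. -/
lemma cross_aux {V : Type*} {G G' : SimpleGraph V} {A B S : Set V} {x y : V}
    (hG' : ∀ u v, G.Adj u v → G'.Adj u v ∨ (u = x ∧ v = y) ∨ (u = y ∧ v = x))
    (hS : ¬ AvoidWalk G' A B S)
    {v b : V} (w : G.Walk v b) (hb : b ∈ B) (hw : ∀ u ∈ w.support, u ∉ S) 
    (hv : AvoidWalk G' A {v} S) : AvoidWalk G' A {x} S ∨ AvoidWalk G' A {y} S := by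
  induction w with
  | nil =>
    obtain ⟨a, ha, _, rfl, w, hw⟩ := hv
    exact absurd ⟨a, ha, _, hb, w, hw⟩ hS
  | @cons v v' b h w ih =>
    rcases hG' _ _ h with h' | ⟨rfl, rfl⟩ | ⟨rfl, rfl⟩
    · exact ih hb (fun u hu => hw u (by simp [hu])) (hv.step h' (hw v' (by simp)))
    · exact Or.inl hv
    · exact Or.inr hv

lemma cross {V : Type*} {G G' : SimpleGraph V} {A B S : Set V} {x y : V}
    (hG' : ∀ u v, G.Adj u v → G'.Adj u v ∨ (u = x ∧ v = y) ∨ (u = y ∧ v = x))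
    (hS : ¬ AvoidWalk G' A B S) (h : AvoidWalk G A B S) :
    AvoidWalk G' A {x} S ∨ AvoidWalk G' A {y} S := by
  obtain ⟨a, ha, b, hb, w, hw⟩ := h
  exact cross_aux hG' hS w hb hw
    ⟨a, ha, a, rfl, Walk.nil, by simpa using hw a w.start_mem_support⟩

lemma surj_of_card {V : Type*} {k : ℕ} {b : Fin k → V} (hb : Function.Injective b)
    {X : Finset V} (hX : X.card ≤ k) (hbX : ∀ i, b i ∈ X) : ∀ x ∈ X, ∃ i, b i = x := by
  classical
  have h : Finset.univ.image b = X := by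
    apply Finset.eq_of_subset_of_card_le
    · intro u hu
      simp at hu
      obtain ⟨i, rfl⟩ := hu
      exact hbX i
    · rw [Finset.card_image_of_injective _ hb]; simpa using hX
  intro x hx
  rw [← h] at hx
  simpa using hx

/-- A vertex of a path linking `A` to `X = insert x S` is reached from `A` avoiding `S`,
unless it lies in `S`, in which case it is the end of the path. -/
lemma prefix_avoid {V : Type*} {G : SimpleGraph V} {A : Set V} {S : Finset V} {k : ℕ}
    {a b : Fin k → V} {p : ∀ i, G.Walk (a i) (b i)} (ha : ∀ i, a i ∈ A)
    (hp : ∀ i, (p i).IsPath) (hd : ∀ i j u, u ∈ (p i).support → u ∈ (p j).support → i = j)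
    (hsurj : ∀ s ∈ S, ∃ i, b i = s) (i : Fin k) {u : V} (hu : u ∈ (p i).support) :
    (u ∈ S → u = b i) ∧ (u ∉ S → AvoidWalk G A {u} S) := by
  have h1 : ∀ s ∈ S, s ∈ (p i).support → s = b i := by
    intro s hs hsi
    obtain ⟨j, rfl⟩ := hsurj s hs
    rw [hd i j _ hsi (p j).end_mem_support]
  refine ⟨fun hs => h1 u hs hu, fun hs => ?_⟩
  obtain ⟨q, r, hqr⟩ := Walk.mem_support_iff_exists_append.mp hu
  refine ⟨a i, ha i, u, rfl, q, fun s hsq hsS => ?_⟩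
  have hs1 : s ∈ (p i).support := by rw [hqr]; simp [hsq]
  have hsb := h1 s hsS hs1
  have hpath := hp i
  rw [hqr] at hpath
  have hne : b i ≠ u := by
    intro e; apply hs; rw [← e, ← hsb]; exact hsS
  exact hpath.ne_of_mem_support_of_append hne hsq r.end_mem_support hsb

lemma glue {V : Type*} {G G' : SimpleGraph V} (hle : G' ≤ G) {A B : Set V} {S : Finset V}
    {x y : V} {k : ℕ} (hxy : G.Adj x y) (hcard : S.card + 1 ≤ k) (hx : x ∉ S) (hy : y ∉ S)
    (hS : ¬ AvoidWalk G' A B S)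
    (h1 : Linked G' A (insert x (S : Set V)) k) (h2 : Linked G' B (insert y (S : Set V)) k) :
    Linked G A B k := by
  classical
  obtain ⟨a, s, p, ha, hs, hp, hpd⟩ := h1
  obtain ⟨b, t, q, hb, ht, hq, hqd⟩ := h2
  have hsi : Function.Injective s := fun i j hij =>
    hpd i j (s i) (p i).end_mem_support (by rw [hij]; exact (p j).end_mem_support)
  have hti : Function.Injective t := fun i j hij =>
    hqd i j (t i) (q i).end_mem_support (by rw [hij]; exact (q j).end_mem_support)
  have hss := surj_of_card hsi (X := insert x S)
    (by rw [Finset.card_insert_of_notMem hx]; exact hcard) (by simpa using hs)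
  have hts := surj_of_card hti (X := insert y S)
    (by rw [Finset.card_insert_of_notMem hy]; exact hcard) (by simpa using ht)
  have hpP := fun i u (hu : u ∈ (p i).support) => prefix_avoid (S := S) ha hp hpd
    (fun s hs => hss s (Finset.mem_insert_of_mem hs)) i hu
  have hqP := fun i u (hu : u ∈ (q i).support) => prefix_avoid (S := S) hb hq hqd
    (fun s hs => hts s (Finset.mem_insert_of_mem hs)) i hu
  -- a common vertex is a common end
  have hcommon : ∀ i j u, u ∈ (p i).support → u ∈ (q j).support → u ∈ S ∧ u = s i ∧ u = t j := by
    intro i j u hu hu'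
    by_cases huS : u ∈ S
    · exact ⟨huS, (hpP i u hu).1 huS, (hqP j u hu').1 huS⟩
    · exact absurd (((hpP i u hu).2 huS).trans_mem ((hqP j u hu').2 huS).symm) hS
  have hmatch : ∀ i, ∃ j, (s i = t j ∧ s i ∈ S) ∨ (s i = x ∧ t j = y) := by
    intro i
    rcases hs i with h | h
    · obtain ⟨j, hj⟩ := hts y (Finset.mem_insert_self _ _)
      exact ⟨j, Or.inr ⟨h, hj⟩⟩
    · obtain ⟨j, hj⟩ := hts (s i) (Finset.mem_insert_of_mem h)
      exact ⟨j, Or.inl ⟨hj.symm, h⟩⟩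
  choose σ hσ using hmatch
  have hσi : Function.Injective σ := by
    intro i j hij
    apply hsi
    have h1 := hσ i
    have h2 := hσ j
    rw [← hij] at h2
    rcases h1 with ⟨h1, h1'⟩ | ⟨h1, h1'⟩ <;> rcases h2 with ⟨h2, h2'⟩ | ⟨h2, h2'⟩
    · rw [h1, h2]
    · rw [h1, h2'] at h1'; exact absurd h1' hy
    · rw [h2, h1'] at h2'; exact absurd h2' hy
    · rw [h1, h2]
  have hw : ∀ i, ∃ w : G.Walk (a i) (b (σ i)), w.IsPath ∧
      ∀ u ∈ w.support, u ∈ (p i).support ∨ u ∈ (q (σ i)).support := by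
    intro i
    have hm : ∃ m : G.Walk (s i) (t (σ i)), ∀ u ∈ m.support, u = s i ∨ u = t (σ i) := by
      rcases hσ i with ⟨h, -⟩ | ⟨h, h'⟩
      · rw [← h]; exact ⟨Walk.nil, by simp⟩
      · rw [h, h']; exact ⟨hxy.toWalk, by simp⟩
    obtain ⟨m, hm⟩ := hm
    let w := (((p i).mapLe hle).append m).append ((q (σ i)).mapLe hle).reverse
    refine ⟨w.bypass, w.bypass_isPath, fun u hu => ?_⟩
    have hu := w.support_bypass_subset_support hu
    simp only [w, Walk.mem_support_append_iff, Walk.support_reverse, List.mem_reverse,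
      Walk.support_mapLe_eq_support] at hu
    rcases hu with (hu | hu) | hu
    · exact Or.inl hu
    · rcases hm u hu with rfl | rfl
      · exact Or.inl (p i).end_mem_support
      · exact Or.inr (q (σ i)).end_mem_support
    · exact Or.inr hu
  choose w hwp hws using hw
  have hpq : ∀ i j u, u ∈ (p i).support → u ∈ (q (σ j)).support → i = j := by
    intro i j u hu hu'
    obtain ⟨h1, h2, h3⟩ := hcommon _ _ _ hu hu'
    rcases hσ j with ⟨h, -⟩ | ⟨h, h'⟩
    · apply hsi; rw [h, ← h2, h3]
    · rw [h3, h'] at h1; exact absurd h1 hy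
  refine ⟨a, b ∘ σ, w, ha, fun i => hb _, hwp, fun i j u hu hu' => ?_⟩
  rcases hws i u hu with hu | hu <;> rcases hws j u hu' with hu' | hu'
  · exact hpd i j u hu hu'
  · exact hpq i j u hu hu'
  · exact (hpq j i u hu' hu).symm
  · exact hσi (hqd _ _ u hu hu')

/-- Menger's theorem for graphs with finitely many edges. -/
lemma menger_fin {V : Type*} (n : ℕ) : ∀ (G : SimpleGraph V), G.edgeSet.Finite →
    G.edgeSet.ncard = n → ∀ (A B : Set V) (k : ℕ),
    (∀ S : Finset V, S.card < k → AvoidWalk G A B S) → Linked G A B k := by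
  classical
  induction n with
  | zero =>
    intro G hf hn A B k h
    have hbot : ∀ u v, ¬ G.Adj u v := by
      intro u v huv
      rw [Set.ncard_eq_zero hf] at hn
      have : s(u, v) ∈ G.edgeSet := huv
      rw [hn] at this; exact this
    have hAB : ∀ S : Finset V, S.card < k → ∃ a ∈ A ∩ B, a ∉ S := by
      intro S hS
      obtain ⟨a, ha, b, hb, w, hw⟩ := h S hS
      cases w with
      | nil => exact ⟨a, ⟨ha, hb⟩, by simpa using hw⟩
      | cons h _ => exact absurd h (hbot _ _)
    have hT : ∀ m ≤ k, ∃ T : Finset V, T.card = m ∧ ∀ u ∈ T, u ∈ A ∩ B := by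
      intro m
      induction m with
      | zero => intro _; exact ⟨∅, by simp⟩
      | succ m ih =>
        intro hm
        obtain ⟨T, hT, hTs⟩ := ih (by omega)
        obtain ⟨a, ha, haT⟩ := hAB T (by omega)
        refine ⟨insert a T, by rw [Finset.card_insert_of_notMem haT, hT], ?_⟩
        intro u hu
        rcases Finset.mem_insert.mp hu with rfl | hu
        · exact ha
        · exact hTs u hu
    obtain ⟨T, hT, hTs⟩ := hT k le_rfl
    let f := (Finset.equivFinOfCardEq hT).symm
    refine ⟨fun i => f i, fun i => f i, fun i => Walk.nil, fun i => (hTs _ (f i).2).1,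
      fun i => (hTs _ (f i).2).2, by simp, ?_⟩
    intro i j u hu hu'
    simp at hu hu'
    exact f.injective (Subtype.ext (hu.symm.trans hu'))
  | succ n ih =>
    intro G hf hn A B k h
    have hne : G.edgeSet.Nonempty := by
      rw [← Set.ncard_pos hf]; omega
    obtain ⟨e, he⟩ := hne
    induction e with | _ x y
    have hxy : G.Adj x y := he
    set G' := G.deleteEdges {s(x, y)} with hG'
    have hle : G' ≤ G := G.deleteEdges_le _
    have hes : G'.edgeSet = G.edgeSet \ {s(x, y)} := by simp [hG']
    have hf' : G'.edgeSet.Finite := by rw [hes]; exact hf.sdiff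
    have hn' : G'.edgeSet.ncard = n := by
      rw [hes, Set.ncard_sdiff_singleton_of_mem he, hn]; rfl
    have IH := ih G' hf' hn'
    by_cases hG : ∀ S : Finset V, S.card < k → AvoidWalk G' A B S
    · exact (IH A B k hG).mono hle
    push Not at hG
    obtain ⟨S, hSk, hS⟩ := hG
    have hadj : ∀ u v, G.Adj u v → G'.Adj u v ∨ (u = x ∧ v = y) ∨ (u = y ∧ v = x) := by
      intro u v huv
      simp only [hG', deleteEdges_adj, Set.mem_singleton_iff, Sym2.eq_iff]
      tauto
    have main : ∀ x y : V, G.Adj x y →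
        (∀ u v, G.Adj u v → G'.Adj u v ∨ (u = x ∧ v = y) ∨ (u = y ∧ v = x)) →
        AvoidWalk G' A {x} S → Linked G A B k := by
      intro x y hxy hadj hx
      have hxS : x ∉ S := by
        obtain ⟨a, ha, _, rfl, w, hw⟩ := hx
        exact hw _ w.end_mem_support
      have hBx : ¬ AvoidWalk G' B {x} S := fun h' => hS (hx.trans_mem h'.symm)
      have hyB : AvoidWalk G' B {y} S := by
        have hS' : ¬ AvoidWalk G' B A S := fun h => hS h.symm
        exact (cross hadj hS' (h S hSk).symm).resolve_left hBx
      have hyS : y ∉ S := by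
        obtain ⟨a, ha, _, rfl, w, hw⟩ := hyB
        exact hw _ w.end_mem_support
      have hAy : ¬ AvoidWalk G' A {y} S := fun h' => hS (h'.trans_mem hyB.symm)
      have hadj1 : ∀ u v, G.Adj u v → u ≠ x → u ≠ y → G'.Adj u v := by
        intro u v huv h1 h2
        rcases hadj u v huv with h | h | h
        · exact h
        · exact absurd h.1 h1
        · exact absurd h.1 h2
      have hcard : S.card + 1 ≤ k := hSk
      refine glue hle hxy hcard hxS hyS hS (IH _ _ _ fun T hT => ?_) (IH _ _ _ fun T hT => ?_)
      · exact side hadj1 hS hAy (h T hT)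
      · exact side (fun u v huv h1 h2 => hadj1 u v huv h2 h1) (fun h => hS h.symm) hBx (h T hT).symm
    rcases cross hadj hS (h S hSk) with hx | hy
    · exact main x y hxy hadj hx
    · exact main y x hxy.symm (fun u v huv => (hadj u v huv).imp_right Or.symm) hy

/-- Reduction of Menger's theorem to a finite vertex set. -/
lemma finite_witness {V : Type*} (G : SimpleGraph V) (A B : Set V) (k : ℕ)
    (h : ∀ S : Finset V, S.card < k → AvoidWalk G A B S) :
    ∃ F : Finset V, ∀ S : Finset V, S.card < k → 
      ∃ a ∈ A, ∃ b ∈ B, ∃ w : G.Walk a b, ∀ u ∈ w.support, u ∉ S ∧ u ∈ F := by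
  classical
  induction k with
  | zero => exact ⟨∅, by simp⟩
  | succ k ih =>
    obtain ⟨F, hF⟩ := ih (fun S hS => h S (by omega))
    have h' : ∀ S : Finset V, ∃ F' : Finset V, S.card < k + 1 → 
        ∃ a ∈ A, ∃ b ∈ B, ∃ w : G.Walk a b, ∀ u ∈ w.support, u ∉ S ∧ u ∈ F' := by
      intro S
      by_cases hS : S.card < k + 1
      · obtain ⟨a, ha, b, hb, w, hw⟩ := h S hS
        exact ⟨w.support.toFinset, fun _ => ⟨a, ha, b, hb, w, fun u hu =>
          ⟨hw u hu, by simpa using hu⟩⟩⟩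
      · exact ⟨∅, fun h => absurd h hS⟩
    choose f hf using h'
    refine ⟨F ∪ F.powerset.biUnion f, fun S hS => ?_⟩
    by_cases hSF : S ⊆ F
    · obtain ⟨a, ha, b, hb, w, hw⟩ := hf S hS
      refine ⟨a, ha, b, hb, w, fun u hu => ⟨(hw u hu).1, ?_⟩⟩
      apply Finset.mem_union_right
      rw [Finset.mem_biUnion]
      exact ⟨S, Finset.mem_powerset.mpr hSF, (hw u hu).2⟩
    · have hlt : (S ∩ F).card < S.card := by
        apply Finset.card_lt_card
        refine ⟨Finset.inter_subset_left, fun h => hSF (h.trans Finset.inter_subset_right)⟩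
      obtain ⟨a, ha, b, hb, w, hw⟩ := hF (S ∩ F) (by omega)
      refine ⟨a, ha, b, hb, w, fun u hu => ⟨fun huS => ?_, Finset.mem_union_left _ (hw u hu).2⟩⟩
      exact (hw u hu).1 (Finset.mem_inter.mpr ⟨huS, (hw u hu).2⟩)

/-- Menger's theorem. -/
lemma menger {V : Type*} (G : SimpleGraph V) (A B : Set V) (k : ℕ)
    (h : ∀ S : Finset V, S.card < k → AvoidWalk G A B S) : Linked G A B k := by
  classical
  obtain ⟨F, hF⟩ := finite_witness G A B k h
  let H : SimpleGraph V :=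
    { Adj := fun u v => G.Adj u v ∧ u ∈ F ∧ v ∈ F
      symm := ⟨fun u v h => ⟨h.1.symm, h.2.2, h.2.1⟩⟩
      loopless := ⟨fun u h => G.loopless.irrefl u h.1⟩ }
  have hle : H ≤ G := fun u v h => h.1
  have hfin : H.edgeSet.Finite := by
    refine (F.sym2.finite_toSet).subset ?_
    intro e he
    induction e with | _ x y
    have : H.Adj x y := he
    simpa using this.2
  refine (menger_fin _ H hfin rfl A B k fun S hS => ?_).mono hle
  obtain ⟨a, ha, b, hb, w, hw⟩ := hF S hS
  have hE : ∀ e ∈ w.edges, e ∈ H.edgeSet := by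
    intro e he
    induction e with | _ x y
    exact ⟨w.adj_of_mem_edges he, (hw _ (w.fst_mem_support_of_mem_edges he)).2,
      (hw _ (w.snd_mem_support_of_mem_edges he)).2⟩
  exact ⟨a, ha, b, hb, w.transfer H hE, fun u hu => (hw u (by simpa using hu)).1⟩

/-- Trimming a walk from `A` to `B`. -/
lemma trim {V : Type*} {G : SimpleGraph V} {A B : Set V} (n : ℕ) : ∀ {a b : V} (w : G.Walk a b),
    w.length = n → a ∈ A → b ∈ B → ∃ a' ∈ A, ∃ b' ∈ B, ∃ p : G.Walk a' b', p.IsPath ∧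
      (∀ u ∈ p.support, u ∈ w.support) ∧
      ∀ u ∈ p.support, u ≠ a' → u ≠ b' → u ∉ A ∧ u ∉ B := by
  classical
  induction n using Nat.strong_induction_on with
  | _ n ih =>
    intro a b w hn ha hb
    by_cases hp : w.IsPath
    · by_cases hint : ∀ u ∈ w.support, u ≠ a → u ≠ b → u ∉ A ∧ u ∉ B
      · exact ⟨a, ha, b, hb, w, hp, fun u hu => hu, hint⟩
      · push Not at hint
        obtain ⟨u, hu, hua, hub, h⟩ := hint
        by_cases huA : u ∈ A
        · obtain ⟨a', ha', b', hb', p, hp, hps, hpi⟩ := ih _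
            (hn ▸ Walk.length_dropUntil_lt_length hu hua) (w.dropUntil u hu) rfl huA hb
          exact ⟨a', ha', b', hb', p, hp,
            fun v hv => w.support_dropUntil_subset_support hu (hps v hv), hpi⟩
        · obtain ⟨a', ha', b', hb', p, hp, hps, hpi⟩ := ih _
            (hn ▸ Walk.length_takeUntil_lt_length hu hub) (w.takeUntil u hu) rfl ha (h huA)
          exact ⟨a', ha', b', hb', p, hp,
            fun v hv => w.support_takeUntil_subset_support hu (hps v hv), hpi⟩
    · have hlt : w.bypass.length < n := by
        rw [← hn]
        refine lt_of_le_of_ne w.length_bypass_le_length fun e => hp ?_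
        have := w.bypass_eq_self_of_length_le_length_bypass e.ge
        rw [← this]; exact w.bypass_isPath
      obtain ⟨a', ha', b', hb', p, hp, hps, hpi⟩ := ih _ hlt w.bypass rfl ha hb
      exact ⟨a', ha', b', hb', p, hp, fun v hv => w.support_bypass_subset_support (hps v hv), hpi⟩

/-- After deleting two vertices, a 5-cycle still has an edge. -/
lemma five_cycle_edge {V : Type*} {G : SimpleGraph V} {v : V} (C : G.Walk v v) (hC : C.IsCycle)
    (hl : C.length = 5) (T : Finset V) (hT : T.card < 3) :
    ∃ a b, G.Adj a b ∧ a ∈ C.support ∧ b ∈ C.support ∧ a ∉ T ∧ b ∉ T := by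
  classical
  have h3 : ∀ a b c : V, a ≠ b → a ≠ c → b ≠ c → a ∈ T → b ∈ T → c ∈ T → False := by
    intro a b c hab hac hbc ha hb hc
    have : ({a, b, c} : Finset V) ⊆ T := by
      intro u hu; simp at hu; rcases hu with rfl | rfl | rfl <;> assumption
    have h := Finset.card_le_card this
    rw [Finset.card_eq_three.mpr ⟨a, b, c, hab, hac, hbc, rfl⟩] at h
    omega
  have hadj : ∀ i < 5, G.Adj (C.getVert i) (C.getVert (i + 1)) := fun i hi =>
    C.adj_getVert_succ (by omega)
  have hinj := hC.getVert_injOn'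
  have hne : ∀ i < 5, ∀ j < 5, i ≠ j → C.getVert i ≠ C.getVert j := fun i hi j hj hij e =>
    hij (hinj (by simp; omega) (by simp; omega) e)
  have h50 : C.getVert 5 = C.getVert 0 := by
    rw [← hl]; simp
  by_contra hcon
  push Not at hcon
  have hE : ∀ i < 5, C.getVert i ∈ T ∨ C.getVert (i + 1) ∈ T := by
    intro i hi
    by_contra hh
    push Not at hh
    exact hh.2 (hcon _ _ (hadj i hi) (C.getVert_mem_support _) (C.getVert_mem_support _) hh.1)
  have e0 := hE 0 (by omega)
  have e1 := hE 1 (by omega)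
  have e2 := hE 2 (by omega)
  have e3 := hE 3 (by omega)
  have e4 := hE 4 (by omega)
  simp only [Nat.reduceAdd, h50] at e0 e1 e2 e3 e4
  have k : ∀ i j l : ℕ, i < j → j < l → l < 5 →
      C.getVert i ∈ T → C.getVert j ∈ T → C.getVert l ∈ T → False := by
    intro i j l hij hjl hl
    exact h3 _ _ _ (hne _ (by omega) _ (by omega) (by omega))
      (hne _ (by omega) _ (by omega) (by omega)) (hne _ (by omega) _ (by omega) (by omega))
  have k1 := k 0 1 2 (by omega) (by omega) (by omega)
  have k2 := k 0 1 3 (by omega) (by omega) (by omega)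
  have k3 := k 0 1 4 (by omega) (by omega) (by omega)
  have k4 := k 0 2 3 (by omega) (by omega) (by omega)
  have k5 := k 0 2 4 (by omega) (by omega) (by omega)
  have k6 := k 0 3 4 (by omega) (by omega) (by omega)
  have k7 := k 1 2 3 (by omega) (by omega) (by omega)
  have k8 := k 1 2 4 (by omega) (by omega) (by omega)
  have k9 := k 1 3 4 (by omega) (by omega) (by omega)
  have k10 := k 2 3 4 (by omega) (by omega) (by omega)
  clear k h3 hE hcon hadj hne hinj h50
  grind

lemma walk_of_deleteVerts {V : Type*} {G : SimpleGraph V} {T : Set V} {a b : V}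
    (w : (deleteVerts G T).Walk a b) (ha : a ∉ T) :
    ∃ w' : G.Walk a b, ∀ u ∈ w'.support, u ∉ T := by
  induction w with
  | nil => exact ⟨Walk.nil, by simpa using ha⟩
  | @cons a c b h w ih =>
    have h' : G.Adj a c ∧ c ∉ T := by
      simp only [deleteVerts, fromRel_adj] at h
      rcases h.2 with h | h
      · exact ⟨h.1, h.2.2⟩
      · exact ⟨h.1.symm, h.2.1⟩
    obtain ⟨w', hw'⟩ := ih h'.2
    refine ⟨Walk.cons h'.1 w', fun u hu => ?_⟩
    simp only [Walk.support_cons, List.mem_cons] at hu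
    rcases hu with rfl | hu
    · exact ha
    · exact hw' u hu

lemma no_two_five_cycles {V : Type*} (G : SimpleGraph V)
    (hno : ¬ ∃ (u : V) (c : G.Walk u u), c.IsCycle ∧ 4 ∣ c.length)
    (hG : EssentiallyThreeConnected G) :
      ¬ ∃ (v₁ v₂ : V) (C₁ : G.Walk v₁ v₁) (C₂ : G.Walk v₂ v₂),
        C₁.IsCycle ∧ C₂.IsCycle ∧ C₁.length = 5 ∧ C₂.length = 5 ∧
        ∀ u, u ∈ C₁.support → u ∉ C₂.support := by
  rintro ⟨v₁, v₂, C₁, C₂, hC₁, hC₂, hl₁, hl₂, hX⟩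
  have hL : Linked G {u | u ∈ C₁.support} {u | u ∈ C₂.support} 3 := by
    apply menger
    intro S hS
    obtain ⟨a, a', haa, ha, ha', haS, haS'⟩ := five_cycle_edge C₁ hC₁ hl₁ S hS
    obtain ⟨b, b', hbb, hb, hb', hbS, hbS'⟩ := five_cycle_edge C₂ hC₂ hl₂ S hS
    have hadj : ∀ u v, G.Adj u v → u ∉ S → v ∉ S → (deleteVerts G (S : Set V)).Adj u v := by
      intro u v huv hu hv
      simp only [deleteVerts, fromRel_adj]
      exact ⟨huv.ne, Or.inl ⟨huv, by simpa using hu, by simpa using hv⟩⟩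
    obtain ⟨w⟩ := hG.2 S (by rw [Set.ncard_coe_finset]; omega) a a' b b' haa.ne hbb.ne
      (hadj _ _ haa haS haS').reachable (hadj _ _ hbb hbS hbS').reachable
    obtain ⟨w', hw'⟩ := walk_of_deleteVerts w (by simpa using haS)
    exact ⟨a, ha, b, hb, w', hw'⟩
  obtain ⟨a, b, p, ha, hb, -, hd⟩ := hL
  have ht := fun i => trim _ (p i) rfl (ha i) (hb i)
  choose a' ha' b' hb' q hq hqs hqi using ht
  have hdis : ∀ i j, i ≠ j → ∀ u, u ∈ (q i).support → u ∉ (q j).support :=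
    fun i j hij u hu hu' => hij (hd i j u (hqs i u hu) (hqs j u hu'))
  refine no_three_paths G hno ⟨v₁, v₂, C₁, C₂, a' 0, b' 0, a' 1, b' 1, a' 2, b' 2, q 0, q 1, q 2,
    hC₁, hC₂, ⟨2, by omega⟩, ⟨2, by omega⟩, by omega, hX, hq 0, hq 1, hq 2, ha' 0, hb' 0, ha' 1,
    hb' 1, ha' 2, hb' 2, hqi 0, hqi 1, hqi 2, hdis 0 1 (by decide), hdis 0 2 (by decide),
    hdis 1 2 (by decide)⟩

/-- In a graph with no cycle of length divisible by 4, two vertex-disjoint odd cycles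
with lengths congruent modulo 4 cannot be joined by three pairwise vertex-disjoint
paths.  In particular, if the graph is essentially 3-connected, it contains no two
vertex-disjoint 5-cycles. -/
theorem stmt_14 {V : Type*} (G : SimpleGraph V)
    (hno : ¬ ∃ (u : V) (c : G.Walk u u), c.IsCycle ∧ 4 ∣ c.length) :
    (¬ ∃ (v₁ v₂ : V) (C₁ : G.Walk v₁ v₁) (C₂ : G.Walk v₂ v₂)
        (a₁ a₂ b₁ b₂ c₁ c₂ : V)
        (P : G.Walk a₁ a₂) (Q : G.Walk b₁ b₂) (R : G.Walk c₁ c₂),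
      C₁.IsCycle ∧ C₂.IsCycle ∧ Odd C₁.length ∧ Odd C₂.length ∧
      C₁.length % 4 = C₂.length % 4 ∧
      (∀ u, u ∈ C₁.support → u ∉ C₂.support) ∧
      P.IsPath ∧ Q.IsPath ∧ R.IsPath ∧
      a₁ ∈ C₁.support ∧ a₂ ∈ C₂.support ∧
      b₁ ∈ C₁.support ∧ b₂ ∈ C₂.support ∧
      c₁ ∈ C₁.support ∧ c₂ ∈ C₂.support ∧
      (∀ u ∈ P.support, u ≠ a₁ → u ≠ a₂ → u ∉ C₁.support ∧ u ∉ C₂.support) ∧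
      (∀ u ∈ Q.support, u ≠ b₁ → u ≠ b₂ → u ∉ C₁.support ∧ u ∉ C₂.support) ∧
      (∀ u ∈ R.support, u ≠ c₁ → u ≠ c₂ → u ∉ C₁.support ∧ u ∉ C₂.support) ∧
      (∀ u, u ∈ P.support → u ∉ Q.support) ∧
      (∀ u, u ∈ P.support → u ∉ R.support) ∧
      (∀ u, u ∈ Q.support → u ∉ R.support)) ∧
    (EssentiallyThreeConnected G →
      ¬ ∃ (v₁ v₂ : V) (C₁ : G.Walk v₁ v₁) (C₂ : G.Walk v₂ v₂),
        C₁.IsCycle ∧ C₂.IsCycle ∧ C₁.length = 5 ∧ C₂.length = 5 ∧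
        ∀ u, u ∈ C₁.support → u ∉ C₂.support) := by
  exact ⟨no_three_paths G hno, no_two_five_cycles G hno⟩
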